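/- Let U ⊆ ℂⁿ be open, let p ∈ (0,+∞) and C ≥ 0, and let (f_k) be a sequence of holomorphic functions on U with ∫_U |f_k|^p dλ ≤ C for every k. Then some subsequence of (f_k) converges uniformly on every compact subset of U to a holomorphic function f on U satisfying ∫_U |f|^p dλ ≤ C. -/

import Mathlib

noncomputable section

open MeasureTheory ENNReal Metric Complex Filter

instance (n : ℕ) : InnerProductSpace ℝ (EuclideanSpace ℂ (Fin n)) :=
  InnerProductSpace.complexToReal
instance (n : ℕ) : MeasurableSpace (EuclideanSpace ℂ (Fin n)) := borel _
instance (n : ℕ) : BorelSpace (EuclideanSpace ℂ (Fin n)) := ⟨rfl⟩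

/-!
On a disc, Jensen's formula makes `log ‖h‖` submean, and `log t ≤ t ^ p / (e p)`, which is sharp at
`t = exp (1 / p)`, upgrades this to the submean property of `‖h‖ ^ p` after rescaling `h`. Since
multiplication by unimodular scalars preserves Haar measure, averaging over complex lines through a
point turns circle means into ball means: `‖f z‖ ^ p` is at most the mean of `‖f‖ ^ p` over any ball
around `z` on which `f` is holomorphic. An `L^p` bound is therefore a local uniform bound, so
Montel's theorem (the Schwarz lemma gives equicontinuity, Arzelà–Ascoli a subsequence, Weierstrass
holomorphy of the limit) applies, and Fatou's lemma passes the `L^p` bound to the limit.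
-/

open scoped Topology

theorem log_le_rpow_div_exp_one_mul {t p : ℝ} (ht : 0 ≤ t) (hp : 0 < p) :
    Real.log t ≤ t ^ p / (Real.exp 1 * p) := by
  obtain rfl | ht := ht.eq_or_lt
  · rw [Real.log_zero]
    positivity
  · rw [le_div_iff₀ (by positivity), Real.rpow_def_of_pos ht]
    calc Real.log t * (Real.exp 1 * p) = Real.exp 1 * (Real.log t * p) := by ring
      _ ≤ Real.exp (Real.log t * p) := Real.exp_one_mul_le_exp

section Circle

variable {F : Type*} [NormedAddCommGroup F] {c : ℂ} {R p : ℝ}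

theorem circleIntegrable_norm_rpow {h : ℂ → F} (hh : ContinuousOn h (sphere c |R|)) (hp : 0 ≤ p) :
    CircleIntegrable (fun z => ‖h z‖ ^ p) c R :=
  ContinuousOn.circleIntegrable' (hh.norm.rpow_const fun _ _ => Or.inr hp)

variable [NormedSpace ℂ F]

theorem log_norm_le_circleAverage_log_norm {h : ℂ → ℂ} (hh : AnalyticOnNhd ℂ h (closedBall c |R|))
    (hc : h c ≠ 0) : Real.log ‖h c‖ ≤ Real.circleAverage (fun z => Real.log ‖h z‖) c R := by
  obtain rfl | hR := eq_or_ne R 0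
  · simp
  rw [AnalyticOnNhd.circleAverage_log_norm hR hh hc]
  refine le_add_of_nonneg_left (finsum_nonneg fun u => ?_)
  by_cases hu : u ∈ closedBall c |R|
  · refine mul_nonneg (mod_cast MeromorphicOn.AnalyticOnNhd.divisor_nonneg hh u) ?_
    obtain rfl | huc := eq_or_ne u c
    · simp
    · have hpos : 0 < ‖c - u‖ := norm_pos_iff.2 (sub_ne_zero.2 huc.symm)
      rw [← Real.log_abs, abs_mul, abs_inv, abs_norm, ← div_eq_mul_inv]
      exact Real.log_nonneg ((one_le_div hpos).2 (by rwa [← dist_eq_norm, dist_comm]))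
  · simp [Function.locallyFinsuppWithin.apply_eq_zero_of_notMem _ hu]

theorem log_norm_le_circleAverage_norm_rpow {h : ℂ → ℂ} (hh : AnalyticOnNhd ℂ h (closedBall c |R|))
    (hc : h c ≠ 0) (hp : 0 < p) :
    Real.log ‖h c‖ ≤ Real.circleAverage (fun z => ‖h z‖ ^ p) c R / (Real.exp 1 * p) := by
  have hsphere := hh.mono sphere_subset_closedBall
  rw [div_eq_inv_mul, ← smul_eq_mul, ← Real.circleAverage_fun_smul]
  refine (log_norm_le_circleAverage_log_norm hh hc).trans (Real.circleAverage_mono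
    hsphere.meromorphicOn.circleIntegrable_log_norm ?_ fun z _ => ?_)
  · exact (circleIntegrable_norm_rpow hsphere.continuousOn hp.le).const_smul
  · rw [smul_eq_mul, ← div_eq_inv_mul]
    exact log_le_rpow_div_exp_one_mul (norm_nonneg _) hp

theorem norm_rpow_le_circleAverage_of_complex {h : ℂ → ℂ}
    (hh : AnalyticOnNhd ℂ h (closedBall c |R|)) (hp : 0 < p) :
    ‖h c‖ ^ p ≤ Real.circleAverage (fun z => ‖h z‖ ^ p) c R := by
  obtain hc | hc := eq_or_ne (h c) 0
  · rw [hc, norm_zero, Real.zero_rpow hp.ne']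
    exact Real.circleAverage_nonneg_of_nonneg fun z _ => by positivity
  have hpos : 0 < ‖h c‖ := norm_pos_iff.2 hc
  -- `log t ≤ t ^ p / (e p)` is an equality at `t = exp (1 / p)`, so rescale `h` to have this
  -- modulus at the centre.
  set a : ℝ := Real.exp (1 / p) / ‖h c‖
  have ha : 0 < a := by positivity
  have hac : a * ‖h c‖ = Real.exp (1 / p) := div_mul_cancel₀ _ hpos.ne'
  have hnorm (z : ℂ) : ‖(a : ℂ) * h z‖ = a * ‖h z‖ := by
    rw [norm_mul, Complex.norm_real, Real.norm_of_nonneg ha.le]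
  have key := log_norm_le_circleAverage_norm_rpow (h := fun z => (a : ℂ) * h z)
    (analyticOnNhd_const.mul hh) (mul_ne_zero (mod_cast ha.ne') hc) hp
  simp only [hnorm, hac, Real.log_exp, Real.mul_rpow ha.le (norm_nonneg _), ← smul_eq_mul (a ^ p),
    Real.circleAverage_fun_smul] at key
  rw [le_div_iff₀ (by positivity), smul_eq_mul] at key
  refine le_of_mul_le_mul_left ?_ (Real.rpow_pos_of_pos ha p)
  calc a ^ p * ‖h c‖ ^ p = Real.exp 1 := by
        rw [← Real.mul_rpow ha.le hpos.le, hac, ← Real.exp_mul, one_div_mul_cancel hp.ne']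
    _ = 1 / p * (Real.exp 1 * p) := by field_simp
    _ ≤ _ := key

theorem norm_rpow_le_circleAverage {h : ℂ → F} (hh : AnalyticOnNhd ℂ h (closedBall c |R|))
    (hp : 0 < p) : ‖h c‖ ^ p ≤ Real.circleAverage (fun z => ‖h z‖ ^ p) c R := by
  obtain ⟨φ, hφ, hφc⟩ := exists_dual_vector'' ℂ (h c)
  have hφh : AnalyticOnNhd ℂ (fun z => φ (h z)) (closedBall c |R|) := φ.comp_analyticOnNhd hh
  calc ‖h c‖ ^ p = ‖φ (h c)‖ ^ p := by rw [hφc, RCLike.norm_ofReal, abs_norm]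
    _ ≤ Real.circleAverage (fun z => ‖φ (h z)‖ ^ p) c R :=
        norm_rpow_le_circleAverage_of_complex hφh hp
    _ ≤ Real.circleAverage (fun z => ‖h z‖ ^ p) c R := by
        refine Real.circleAverage_mono
          (circleIntegrable_norm_rpow (hφh.mono sphere_subset_closedBall).continuousOn hp.le)
          (circleIntegrable_norm_rpow (hh.mono sphere_subset_closedBall).continuousOn hp.le)
          fun z _ => ?_
        gcongr
        simpa only [one_mul] using φ.le_of_opNorm_le hφ (h z)

theorem ofReal_circleAverage_eq_laverage {u : ℂ → ℝ} (hu : CircleIntegrable u c R)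
    (hu₀ : ∀ z ∈ sphere c |R|, 0 ≤ u z) : ENNReal.ofReal (Real.circleAverage u c R) =
      ⨍⁻ θ in Set.Ioc 0 (2 * Real.pi), ENNReal.ofReal (u (circleMap c R θ)) ∂volume := by
  rw [Real.circleAverage_def, intervalIntegral.integral_of_le Real.two_pi_pos.le, smul_eq_mul,
    ENNReal.ofReal_mul (by positivity), ENNReal.ofReal_inv_of_pos Real.two_pi_pos,
    ofReal_integral_eq_lintegral_ofReal
      ((intervalIntegrable_iff_integrableOn_Ioc_of_le Real.two_pi_pos.le).1 hu)
      (ae_of_all _ fun θ => hu₀ _ (circleMap_mem_sphere' c R θ)),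
    setLAverage_eq, Real.volume_Ioc, sub_zero, ENNReal.div_eq_inv_mul]

theorem enorm_rpow_le_laverage_circleMap {h : ℂ → F}
    (hh : AnalyticOnNhd ℂ h (closedBall c |R|)) (hp : 0 < p) :
    ‖h c‖ₑ ^ p ≤ ⨍⁻ θ in Set.Ioc 0 (2 * Real.pi), ‖h (circleMap c R θ)‖ₑ ^ p ∂volume := by
  have hint := circleIntegrable_norm_rpow (hh.mono sphere_subset_closedBall).continuousOn hp.le
  simp only [← ofReal_norm, ENNReal.ofReal_rpow_of_nonneg (norm_nonneg _) hp.le]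
  rw [← ofReal_circleAverage_eq_laverage hint fun z _ => by positivity]
  exact ENNReal.ofReal_le_ofReal (norm_rpow_le_circleAverage hh hp)

end Circle

section HaarMeasure

variable {E : Type*} [NormedAddCommGroup E] [ProperSpace E] [MeasurableSpace E] [BorelSpace E]
  (μ : Measure E) [μ.IsAddHaarMeasure]

theorem measurePreserving_linearIsometryEquiv {𝕜 : Type*} [Semiring 𝕜] [Module 𝕜 E]
    (L : E ≃ₗᵢ[𝕜] E) : MeasurePreserving L μ μ := by
  refine ⟨L.continuous.measurable, ?_⟩
  have : (μ.map L).IsAddHaarMeasure := L.toContinuousLinearEquiv.isAddHaarMeasure_map μ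
  let K : TopologicalSpace.PositiveCompacts E :=
    ⟨⟨closedBall 0 1, isCompact_closedBall 0 1⟩,
      (nonempty_ball.2 one_pos).mono ball_subset_interior_closedBall⟩
  have hK : μ.map L K = μ K := by
    rw [Measure.map_apply L.continuous.measurable K.isCompact.measurableSet]
    exact congrArg μ (by simp [K])
  rw [Measure.addHaarMeasure_unique (μ.map L) K, hK, ← Measure.addHaarMeasure_unique μ K]

variable [NormedSpace ℂ E]

theorem measurePreserving_smul_of_norm_eq_one {a : ℂ} (ha : ‖a‖ = 1) :
    MeasurePreserving (fun x : E => a • x) μ μ := by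
  have ha₀ : a ≠ 0 := norm_ne_zero_iff.1 (ha ▸ one_ne_zero)
  exact measurePreserving_linearIsometryEquiv μ
    { LinearEquiv.smulOfNeZero ℂ E a ha₀ with norm_map' := fun x => by simp [norm_smul, ha] }

theorem lintegral_laverage_circleMap_smul {G : E → ℝ≥0∞} (hG : Measurable G) :
    ∫⁻ w, ⨍⁻ θ in Set.Ioc 0 (2 * Real.pi), G (circleMap 0 1 θ • w) ∂volume ∂μ = ∫⁻ w, G w ∂μ := by
  have hvol : volume (Set.Ioc 0 (2 * Real.pi)) ≠ 0 := by simp [Real.pi_pos]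
  have hmeas : Measurable fun q : E × ℝ => G (circleMap 0 1 q.2 • q.1) :=
    hG.comp (by fun_prop)
  have hrot (θ : ℝ) : ∫⁻ w, G (circleMap 0 1 θ • w) ∂μ = ∫⁻ w, G w ∂μ :=
    (measurePreserving_smul_of_norm_eq_one μ (by simp)).lintegral_comp hG
  simp only [setLAverage_eq']
  rw [lintegral_lintegral_swap hmeas.aemeasurable]
  simp only [hrot]
  rw [← setLAverage_eq', setLAverage_const hvol measure_Ioc_lt_top.ne]

end HaarMeasure

section SubMeanValue

variable {E F : Type*} [NormedAddCommGroup E] [NormedSpace ℂ E] [NormedAddCommGroup F]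
  [NormedSpace ℂ F] [CompleteSpace F] {f : E → F} {z w : E} {p r : ℝ}

theorem enorm_rpow_le_laverage_circleMap_smul (hf : DifferentiableOn ℂ f (ball z r))
    (hw : w ∈ ball (0 : E) r) (hp : 0 < p) :
    ‖f z‖ₑ ^ p ≤
      ⨍⁻ θ in Set.Ioc 0 (2 * Real.pi), ‖f (z + circleMap 0 1 θ • w)‖ₑ ^ p ∂volume := by
  have hdisc : IsOpen ((fun a : ℂ => z + a • w) ⁻¹' ball z r) :=
    isOpen_ball.preimage (by fun_prop)
  have hline : DifferentiableOn ℂ (fun a : ℂ => z + a • w) ((fun a => z + a • w) ⁻¹' ball z r) := by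
    fun_prop
  have hslice : AnalyticOnNhd ℂ (fun a : ℂ => f (z + a • w)) (closedBall 0 |1|) := by
    refine ((hf.comp hline (Set.mapsTo_preimage _ _)).analyticOnNhd hdisc).mono fun a ha => ?_
    rw [abs_one, mem_closedBall_zero_iff] at ha
    rw [Set.mem_preimage, mem_ball_iff_norm, add_sub_cancel_left, norm_smul]
    exact (mul_le_of_le_one_left (norm_nonneg w) ha).trans_lt (mem_ball_zero_iff.1 hw)
  simpa only [zero_smul, add_zero] using enorm_rpow_le_laverage_circleMap hslice hp

theorem enorm_rpow_mul_measure_ball_le [MeasurableSpace E] [BorelSpace E] [ProperSpace E]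
    (μ : Measure E) [μ.IsAddHaarMeasure] (hf : DifferentiableOn ℂ f (ball z r)) (hp : 0 < p) :
    ‖f z‖ₑ ^ p * μ (ball z r) ≤ ∫⁻ x in ball z r, ‖f x‖ₑ ^ p ∂μ := by
  classical
  set g : E → ℝ≥0∞ := (ball z r).indicator fun x => ‖f x‖ₑ ^ p with hg
  have hg_meas : Measurable g := by
    rw [hg, ← Set.piecewise_eq_indicator]
    exact ContinuousOn.measurable_piecewise
      (ENNReal.continuous_rpow_const.comp_continuousOn hf.continuousOn.enorm)
      continuousOn_const measurableSet_ball
  have hg_sub (w : E) : (ball (0 : E) r).indicator (fun _ => ‖f z‖ₑ ^ p) w ≤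
      ⨍⁻ θ in Set.Ioc 0 (2 * Real.pi), g (z + circleMap 0 1 θ • w) ∂volume := by
    refine Set.indicator_apply_le' (fun hw => ?_) fun _ => zero_le
    have hmem (θ : ℝ) : z + circleMap 0 1 θ • w ∈ ball z r := by
      simpa [norm_smul] using hw
    simpa only [hg, Set.indicator_of_mem (hmem _)] using
      enorm_rpow_le_laverage_circleMap_smul hf hw hp
  calc ‖f z‖ₑ ^ p * μ (ball z r)
      = ∫⁻ w, (ball (0 : E) r).indicator (fun _ => ‖f z‖ₑ ^ p) w ∂μ := by
        rw [lintegral_indicator_const measurableSet_ball, Measure.addHaar_ball_center μ z]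
    _ ≤ ∫⁻ w, ⨍⁻ θ in Set.Ioc 0 (2 * Real.pi), g (z + circleMap 0 1 θ • w) ∂volume ∂μ :=
        lintegral_mono hg_sub
    _ = ∫⁻ w, g (z + w) ∂μ :=
        lintegral_laverage_circleMap_smul μ (hg_meas.comp (measurable_const_add z))
    _ = ∫⁻ x in ball z r, ‖f x‖ₑ ^ p ∂μ := by
        rw [lintegral_add_left_eq_self, hg, lintegral_indicator measurableSet_ball]

end SubMeanValue

/-- Local uniform boundedness on `U` of a family of vector-valued functions, the hypothesis of
Montel's theorem. Neighbourhoods are taken within `U`, as the functions are only meaningful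
there. -/
def LocallyUniformlyBoundedOn {ι X F : Type*} [TopologicalSpace X] [Norm F] (f : ι → X → F)
    (U : Set X) : Prop :=
  ∀ x ∈ U, ∃ M : ℝ, ∀ᶠ y in 𝓝[U] x, ∀ i, ‖f i y‖ ≤ M

theorem locallyUniformlyBoundedOn_of_lintegral_enorm_rpow_le {ι E F : Type*}
    [NormedAddCommGroup E] [NormedSpace ℂ E] [ProperSpace E] [MeasurableSpace E] [BorelSpace E]
    [NormedAddCommGroup F] [NormedSpace ℂ F] [CompleteSpace F] (μ : Measure E) [μ.IsAddHaarMeasure]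
    {f : ι → E → F} {U : Set E} (hU : IsOpen U) {p : ℝ} (hp : 0 < p) {C : ℝ≥0∞} (hC : C ≠ ∞)
    (hf : ∀ i, DifferentiableOn ℂ (f i) U) (hfC : ∀ i, ∫⁻ x in U, ‖f i x‖ₑ ^ p ∂μ ≤ C) :
    LocallyUniformlyBoundedOn f U := by
  intro x hx
  obtain ⟨r, hr, hrU⟩ := Metric.isOpen_iff.1 hU x hx
  have hr₂ : 0 < r / 2 := half_pos hr
  have hμ : μ (ball 0 (r / 2)) ≠ 0 := (measure_ball_pos μ 0 hr₂).ne'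
  refine ⟨((C / μ (ball 0 (r / 2))) ^ p⁻¹).toReal, mem_nhdsWithin_of_mem_nhds ?_⟩
  filter_upwards [ball_mem_nhds x hr₂] with y hy i
  have hyU : ball y (r / 2) ⊆ U :=
    (ball_subset_ball' (by linarith [mem_ball.1 hy])).trans hrU
  have hyC : ‖f i y‖ₑ ^ p * μ (ball 0 (r / 2)) ≤ C :=
    calc ‖f i y‖ₑ ^ p * μ (ball 0 (r / 2)) = ‖f i y‖ₑ ^ p * μ (ball y (r / 2)) := by
          rw [Measure.addHaar_ball_center μ y]
      _ ≤ ∫⁻ x in ball y (r / 2), ‖f i x‖ₑ ^ p ∂μ :=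
          enorm_rpow_mul_measure_ball_le μ ((hf i).mono hyU) hp
      _ ≤ ∫⁻ x in U, ‖f i x‖ₑ ^ p ∂μ := lintegral_mono_set hyU
      _ ≤ C := hfC i
  rw [← toReal_enorm]
  refine ENNReal.toReal_mono
    (ENNReal.rpow_ne_top_of_nonneg (by positivity) (ENNReal.div_ne_top hC hμ)) ?_
  rw [ENNReal.le_rpow_inv_iff hp]
  exact (ENNReal.le_div_iff_mul_le (Or.inl hμ) (Or.inl measure_ball_lt_top.ne)).2 hyC

theorem mapsTo_closedBall_of_forall_ball_norm_le {X F : Type*} [PseudoMetricSpace X]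
    [SeminormedAddCommGroup F] {f : X → F} {x : X} {r M : ℝ} (hr : 0 < r)
    (hM : ∀ y ∈ ball x r, ‖f y‖ ≤ M) : Set.MapsTo f (ball x r) (closedBall (f x) (2 * M)) :=
  fun y hy =>
    calc dist (f y) (f x) ≤ ‖f y‖ + ‖f x‖ := dist_le_norm_add_norm _ _
      _ ≤ M + M := add_le_add (hM y hy) (hM x (mem_ball_self hr))
      _ = 2 * M := (two_mul M).symm

theorem LocallyUniformlyBoundedOn.equicontinuousOn {ι E F : Type*} [NormedAddCommGroup E]
    [NormedSpace ℂ E] [NormedAddCommGroup F] [NormedSpace ℂ F] {f : ι → E → F} {U : Set E}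
    (hb : LocallyUniformlyBoundedOn f U) (hU : IsOpen U)
    (hf : ∀ i, DifferentiableOn ℂ (f i) U) : EquicontinuousOn f U := by
  intro x hx
  obtain ⟨M, hM⟩ := hb x hx
  rw [hU.nhdsWithin_eq hx] at hM
  obtain ⟨r, hr, hball⟩ := Metric.eventually_nhds_iff_ball.1 (hM.and (hU.mem_nhds hx))
  refine EquicontinuousAt.equicontinuousWithinAt (Metric.equicontinuousAt_of_continuity_modulus
    (fun y => 2 * M / r * dist y x) ?_ f ?_) U
  · exact Continuous.tendsto' (by fun_prop) _ _ (by simp)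
  · filter_upwards [ball_mem_nhds x hr] with y hy i
    rw [dist_comm]
    exact Complex.dist_le_div_mul_dist_of_mapsTo_ball ((hf i).mono fun y hy => (hball y hy).2)
      (mapsTo_closedBall_of_forall_ball_norm_le hr fun y hy => (hball y hy).1 i) hy

theorem exists_subseq_tendstoLocallyUniformly_of_equicontinuous {X α : Type*} [TopologicalSpace X]
    [WeaklyLocallyCompactSpace X] [SigmaCompactSpace X] [PseudoMetricSpace α] [ProperSpace α]
    {f : ℕ → X → α} (hf : Equicontinuous f)
    (hb : ∀ x, Bornology.IsBounded (Set.range fun k => f k x)) :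
    ∃ (g : X → α) (φ : ℕ → ℕ), StrictMono φ ∧
      TendstoLocallyUniformly (fun k => f (φ k)) g atTop := by
  let A : Set (X → α) := closure (Set.range f)
  have hA_equicont : A.Equicontinuous := Set.Equicontinuous.closure (equicontinuous_iff_range.1 hf)
  have hA_compact : IsCompact A := by
    refine (isCompact_univ_pi fun x => (hb x).isCompact_closure).of_isClosed_subset
      isClosed_closure (closure_minimal ?_ (isClosed_set_pi fun x _ => isClosed_closure))
    rintro _ ⟨k, rfl⟩ x -
    exact subset_closure (Set.mem_range_self k)
  let S : Set C(X, α) := ContinuousMap.toFun ⁻¹' A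
  have hS : ContinuousMap.toFun '' S = A :=
    Set.image_preimage_eq_of_subset fun g hg => ⟨⟨g, hA_equicont.continuous ⟨g, hg⟩⟩, rfl⟩
  have hS_compact : IsCompact S :=
    ArzelaAscoli.isCompact_of_equicontinuous S (hS.symm ▸ hA_compact)
      fun x V hV => (hA_equicont x V hV).mono fun y hy g => hy ⟨g, g.2⟩
  let F : ℕ → C(X, α) := fun k => ⟨f k, hf.continuous k⟩
  obtain ⟨g, -, φ, hφ, hlim⟩ :=
    hS_compact.isSeqCompact (x := F) fun k => subset_closure (Set.mem_range_self k)
  exact ⟨g, φ, hφ, ContinuousMap.tendsto_iff_tendstoLocallyUniformly.1 hlim⟩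

theorem exists_subseq_tendstoLocallyUniformlyOn_of_equicontinuousOn {X α : Type*}
    [TopologicalSpace X] [LocallyCompactSpace X] [SecondCountableTopology X]
    [PseudoMetricSpace α] [ProperSpace α]
    {f : ℕ → X → α} {U : Set X} (hU : IsOpen U) (hf : EquicontinuousOn f U)
    (hb : ∀ x ∈ U, Bornology.IsBounded (Set.range fun k => f k x)) :
    ∃ (g : X → α) (φ : ℕ → ℕ), StrictMono φ ∧
      TendstoLocallyUniformlyOn (fun k => f (φ k)) g atTop U := by
  have : LocallyCompactSpace U := hU.locallyCompactSpace
  obtain ⟨g, φ, hφ, hg⟩ :=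
    exists_subseq_tendstoLocallyUniformly_of_equicontinuous
      ((equicontinuous_restrict_iff f).2 hf) fun x => hb x x.2
  refine ⟨Function.extend Subtype.val g (f 0), φ, hφ, ?_⟩
  rw [tendstoLocallyUniformlyOn_iff_tendstoLocallyUniformly_comp_coe]
  rwa [Function.extend_comp Subtype.val_injective]

section Weierstrass

variable {ι E F : Type*} {l : Filter ι} [NormedAddCommGroup E] [NormedSpace ℂ E]
  [NormedAddCommGroup F] [NormedSpace ℂ F] {s U : Set E}

theorem norm_fderiv_le_of_forall_ball_norm_le {f : E → F} {x : E} {r M : ℝ} (hr : 0 < r)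
    (hf : DifferentiableOn ℂ f (ball x r)) (hM : ∀ y ∈ ball x r, ‖f y‖ ≤ M) :
    ‖fderiv ℂ f x‖ ≤ 2 * M / r :=
  Complex.norm_fderiv_le_div_of_mapsTo_ball hf (mapsTo_closedBall_of_forall_ball_norm_le hr hM) hr

theorem tendstoUniformlyOn_fderiv_zero {h : ι → E → F} {δ : ℝ} (hδ : 0 < δ)
    (hd : ∀ i, DifferentiableOn ℂ (h i) (thickening δ s))
    (hh : TendstoUniformlyOn h 0 l (thickening δ s)) :
    TendstoUniformlyOn (fun i => fderiv ℂ (h i)) 0 l s := by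
  rw [Metric.tendstoUniformlyOn_iff] at hh ⊢
  intro ε hε
  filter_upwards [hh (ε * δ / 4) (by positivity)] with i hi x hx
  have hball : ball x δ ⊆ thickening δ s := ball_subset_thickening hx δ
  simp only [Pi.zero_apply, dist_zero_left] at hi ⊢
  calc ‖fderiv ℂ (h i) x‖ ≤ 2 * (ε * δ / 4) / δ :=
        norm_fderiv_le_of_forall_ball_norm_le hδ ((hd i).mono hball)
          fun y hy => (hi y (hball hy)).le
    _ = ε / 2 := by field_simp; norm_num
    _ < ε := half_lt_self hε

theorem uniformCauchySeqOn_fderiv {f : ι → E → F} {δ : ℝ} (hδ : 0 < δ)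
    (hd : ∀ i, DifferentiableOn ℂ (f i) (thickening δ s))
    (hf : UniformCauchySeqOn f l (thickening δ s)) :
    UniformCauchySeqOn (fun i => fderiv ℂ (f i)) l s := by
  rw [SeminormedAddGroup.uniformCauchySeqOn_iff_tendstoUniformlyOn_zero] at hf ⊢
  refine (tendstoUniformlyOn_fderiv_zero hδ (fun n => (hd n.1).neg.add (hd n.2)) hf).congr ?_
  refine .of_forall fun n x hx => ?_
  have hdx (i : ι) : DifferentiableAt ℂ (f i) x :=
    (hd i).differentiableAt (isOpen_thickening.mem_nhds (self_subset_thickening hδ s hx))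
  simp only [fderiv_add (hdx n.1).neg (hdx n.2), fderiv_neg]

theorem differentiableAt_of_tendstoUniformlyOn_ball [CompleteSpace F] [l.NeBot] {f : ι → E → F}
    {g : E → F} {x : E} {r : ℝ} (hr : 0 < r) (hd : ∀ i, DifferentiableOn ℂ (f i) (ball x r))
    (hf : TendstoUniformlyOn f g l (ball x r)) : DifferentiableAt ℂ g x := by
  have hr₂ : 0 < r / 2 := half_pos hr
  have hthick : thickening (r / 2) (ball x (r / 2)) ⊆ ball x r :=
    (thickening_ball x _ _).trans_eq (by rw [add_halves])
  have hsub : ball x (r / 2) ⊆ ball x r := ball_subset_ball (half_le_self hr.le)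
  have hcauchy : UniformCauchySeqOn (fun i => fderiv ℂ (f i)) l (ball x (r / 2)) :=
    uniformCauchySeqOn_fderiv hr₂ (fun i => (hd i).mono hthick)
      (hf.uniformCauchySeqOn.mono hthick)
  choose! g' hg' using fun y (hy : y ∈ ball x (r / 2)) =>
    CompleteSpace.complete (hcauchy.cauchy_map hy)
  exact (hasFDerivAt_of_tendstoUniformlyOn isOpen_ball
    (hcauchy.tendstoUniformlyOn_of_tendsto hg')
    (fun i y hy => ((hd i).differentiableAt (isOpen_ball.mem_nhds (hsub hy))).hasFDerivAt)
    (fun y hy => hf.tendsto_at (hsub hy)) (mem_ball_self hr₂)).differentiableAt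

theorem differentiableOn_of_tendstoLocallyUniformlyOn [LocallyCompactSpace E] [CompleteSpace F]
    [l.NeBot] (hU : IsOpen U) {f : ι → E → F} {g : E → F} (hd : ∀ i, DifferentiableOn ℂ (f i) U)
    (hf : TendstoLocallyUniformlyOn f g l U) : DifferentiableOn ℂ g U := by
  intro x hx
  obtain ⟨K, hKx, hKU, hK⟩ := local_compact_nhds (hU.mem_nhds hx)
  obtain ⟨r, hr, hrK⟩ := Metric.mem_nhds_iff.1 hKx
  have hunif := (tendstoLocallyUniformlyOn_iff_forall_isCompact hU).1 hf K hKU hK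
  exact (differentiableAt_of_tendstoUniformlyOn_ball hr
    (fun i => (hd i).mono (hrK.trans hKU)) (hunif.mono hrK)).differentiableWithinAt

end Weierstrass

theorem lintegral_le_of_ae_tendsto {ι α : Type*} {l : Filter ι} [l.NeBot]
    [l.IsCountablyGenerated] [MeasurableSpace α] {μ : Measure α} {f : ι → α → ℝ≥0∞} {g : α → ℝ≥0∞}
    {C : ℝ≥0∞} (hf : ∀ i, AEMeasurable (f i) μ)
    (hfg : ∀ᵐ x ∂μ, Tendsto (fun i => f i x) l (𝓝 (g x))) (hC : ∀ i, ∫⁻ x, f i x ∂μ ≤ C) :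
    ∫⁻ x, g x ∂μ ≤ C :=
  calc ∫⁻ x, g x ∂μ = ∫⁻ x, liminf (fun i => f i x) l ∂μ :=
        lintegral_congr_ae (hfg.mono fun _ hx => hx.liminf_eq.symm)
    _ ≤ liminf (fun i => ∫⁻ x, f i x ∂μ) l := lintegral_liminf_le' hf
    _ ≤ C := liminf_le_of_frequently_le' (.of_forall hC)

theorem LocallyUniformlyBoundedOn.exists_subseq_tendstoLocallyUniformlyOn {E F : Type*}
    [NormedAddCommGroup E] [NormedSpace ℂ E] [ProperSpace E] [NormedAddCommGroup F]
    [NormedSpace ℂ F] [ProperSpace F] {f : ℕ → E → F} {U : Set E}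
    (hb : LocallyUniformlyBoundedOn f U) (hU : IsOpen U)
    (hf : ∀ k, DifferentiableOn ℂ (f k) U) :
    ∃ (g : E → F) (φ : ℕ → ℕ), StrictMono φ ∧ DifferentiableOn ℂ g U ∧
      TendstoLocallyUniformlyOn (fun k => f (φ k)) g atTop U := by
  have hrange : ∀ x ∈ U, Bornology.IsBounded (Set.range fun k => f k x) := fun x hx => by
    obtain ⟨M, hM⟩ := hb x hx
    exact isBounded_iff_forall_norm_le.2 ⟨M, Set.forall_mem_range.2 (hM.self_of_nhdsWithin hx)⟩
  obtain ⟨g, φ, hφ, hlim⟩ :=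
    exists_subseq_tendstoLocallyUniformlyOn_of_equicontinuousOn hU
      (hb.equicontinuousOn hU hf) hrange
  exact ⟨g, φ, hφ,
    differentiableOn_of_tendstoLocallyUniformlyOn hU (fun k => hf (φ k)) hlim, hlim⟩

theorem montel_Lp_general {E F : Type*} [NormedAddCommGroup E] [NormedSpace ℂ E] [ProperSpace E]
    [MeasurableSpace E] [BorelSpace E] [NormedAddCommGroup F] [NormedSpace ℂ F] [ProperSpace F]
    (μ : Measure E) [μ.IsAddHaarMeasure] {U : Set E} (hU : IsOpen U) {p : ℝ} (hp : 0 < p)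
    {C : ℝ≥0∞} (hC : C ≠ ∞) {f : ℕ → E → F} (hf : ∀ k, DifferentiableOn ℂ (f k) U)
    (hfC : ∀ k, ∫⁻ x in U, ‖f k x‖ₑ ^ p ∂μ ≤ C) :
    ∃ (g : E → F) (φ : ℕ → ℕ), StrictMono φ ∧ DifferentiableOn ℂ g U ∧
      (∫⁻ x in U, ‖g x‖ₑ ^ p ∂μ ≤ C) ∧
      ∀ K ⊆ U, IsCompact K → TendstoUniformlyOn (fun k => f (φ k)) g atTop K := by
  have hb := locallyUniformlyBoundedOn_of_lintegral_enorm_rpow_le μ hU hp hC hf hfC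
  obtain ⟨g, φ, hφ, hg, hlim⟩ := hb.exists_subseq_tendstoLocallyUniformlyOn hU hf
  have hcont := (ENNReal.continuous_rpow_const (y := p)).comp (continuous_enorm (E := F))
  have hmeas (k : ℕ) : AEMeasurable (fun x => ‖f (φ k) x‖ₑ ^ p) (μ.restrict U) :=
    (hcont.comp_continuousOn (hf (φ k)).continuousOn).aemeasurable hU.measurableSet
  have htendsto : ∀ᵐ x ∂μ.restrict U,
      Tendsto (fun k => ‖f (φ k) x‖ₑ ^ p) atTop (𝓝 (‖g x‖ₑ ^ p)) :=
    ae_restrict_of_forall_mem hU.measurableSet fun x hx =>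
      (hcont.tendsto _).comp (hlim.tendsto_at hx)
  exact ⟨g, φ, hφ, hg, lintegral_le_of_ae_tendsto hmeas htendsto fun k => hfC (φ k),
    (tendstoLocallyUniformlyOn_iff_forall_isCompact hU).1 hlim⟩

/-- Let `U ⊆ ℂⁿ` be open, `p ∈ (0,∞)`, `C ≥ 0`, and let `(f_k)` be a
sequence of holomorphic functions on `U` with `∫_U |f_k|^p dλ ≤ C` for every `k`. Then a
subsequence converges uniformly on every compact subset of `U` to a holomorphic function
`f` with `∫_U |f|^p dλ ≤ C`. -/
theorem montel_Lp {n : ℕ} (U : Set (EuclideanSpace ℂ (Fin n))) (hU : IsOpen U)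
    (p : ℝ) (hp : 0 < p) (C : ℝ) (hC : 0 ≤ C)
    (f : ℕ → EuclideanSpace ℂ (Fin n) → ℂ)
    (hfd : ∀ k, DifferentiableOn ℂ (f k) U)
    (hfC : ∀ k, ∫⁻ x in U, ENNReal.ofReal (‖f k x‖ ^ p) ≤ ENNReal.ofReal C) :
    ∃ (g : EuclideanSpace ℂ (Fin n) → ℂ) (ι : ℕ → ℕ), StrictMono ι ∧
      DifferentiableOn ℂ g U ∧
      (∫⁻ x in U, ENNReal.ofReal (‖g x‖ ^ p) ≤ ENNReal.ofReal C) ∧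
      ∀ K : Set (EuclideanSpace ℂ (Fin n)), K ⊆ U → IsCompact K →
        TendstoUniformlyOn (fun k => f (ι k)) g atTop K := by
  simp only [← ENNReal.ofReal_rpow_of_nonneg (norm_nonneg _) hp.le, ofReal_norm] at hfC ⊢
  exact montel_Lp_general volume hU hp ofReal_ne_top hfd hfC
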